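/- arXiv:2512.15320 — 2 statements merged into one kernel-verified Lean document; each statement's English description precedes it below -/
import Mathlib

section
/- Let 0 < p ≤ q < ∞ and let f be a measurable function on [0,1]². Then (∫₀¹(∫₀¹ |f(x₁,x₂)|^q dx₂)^{p/q} dx₁)^{1/p} ≥ (∫₀¹(∫₀¹ (f^{*₁}(t₁,x₂))^q dx₂)^{p/q} dt₁)^{1/p}. -/
open MeasureTheory Set

/-- The decreasing rearrangement on `[0,1]` (with Lebesgue measure) of a measurable
function `g`: `g^*(t) = inf {σ ≥ 0 : |{x ∈ [0,1] : |g(x)| > σ}| ≤ t}`. -/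
noncomputable def rearr (g : ℝ → ℝ) (t : ℝ) : ℝ :=
  sInf {σ : ℝ | 0 ≤ σ ∧ volume {x ∈ Icc (0:ℝ) 1 | σ < |g x|} ≤ ENNReal.ofReal t}

/-- The rearrangement of `x₁ ↦ f (x₁, x₂)` in the first variable, the second one fixed. -/
noncomputable def rearr1 (f : ℝ → ℝ → ℝ) (t₁ x₂ : ℝ) : ℝ :=
  rearr (fun x₁ => f x₁ x₂) t₁

/-!
Write `g x = ∫ f(x, y) dy` and `G t = ∫ f^{*₁}(t, y) dy`; replacing `f` by `|f|^q` reduces the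
claim to `∫ G^r ≤ ∫ g^r` with `r = p / q ≤ 1`. For each fixed `y` and each set `E` of finite
measure, the integral of `f^{*₁}(·, y)` over `(|E|, ∞)` is at most that of `f(·, y)` over the
complement of `E`; by Tonelli the same holds for `G` and `g`. Taking `E = {g > u}` gives
`∫ min(G, u) ≤ ∫ min(g, u)` for every level `u`. Finally, for `r < 1` the power `a^r` is, up to a
constant, the superposition `∫₀^∞ min(a, u) u^(r-2) du` of truncations.
-/

open scoped ENNReal

section Rearrangement

variable {α β : Type*} [MeasurableSpace α] [MeasurableSpace β]

/-- The decreasing rearrangement `g^*` of a function `g` on a measure space. Levels `σ` and times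
`t` range over `ℝ≥0∞`, so the defining set contains `⊤` and its infimum is never a junk value. -/
noncomputable def decreasingRearrangement (μ : Measure α) (g : α → ℝ≥0∞) (t : ℝ≥0∞) : ℝ≥0∞ :=
  sInf {σ | μ {x | σ < g x} ≤ t}

theorem exists_gt_lt_measure_of_lt_measure {μ : Measure α} {g : α → ℝ≥0∞} {s t : ℝ≥0∞}
    (h : t < μ {x | s < g x}) : ∃ u > s, t < μ {x | u < g x} := by
  have hs : s < ⊤ := by
    by_contra hs
    simp [not_lt_top_iff.1 hs] at h
  obtain ⟨u, hu_anti, hu_mem, hu_lim⟩ := exists_seq_strictAnti_tendsto' hs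
  have hmono : Monotone fun n => {x | u n < g x} := fun m n hmn x hx =>
    (hu_anti.antitone hmn).trans_lt hx
  have hUnion : {x | s < g x} = ⋃ n, {x | u n < g x} := by
    ext x
    simp only [mem_ofPred_eq, mem_iUnion]
    exact ⟨fun hx => (hu_lim.eventually_lt_const hx).exists, fun ⟨n, hn⟩ => (hu_mem n).1.trans hn⟩
  rw [hUnion, hmono.measure_iUnion, lt_iSup_iff] at h
  obtain ⟨n, hn⟩ := h
  exact ⟨u n, (hu_mem n).1, hn⟩

theorem lt_decreasingRearrangement_iff {μ : Measure α} {g : α → ℝ≥0∞} {s t : ℝ≥0∞} :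
    s < decreasingRearrangement μ g t ↔ t < μ {x | s < g x} := by
  refine ⟨fun h => not_le.1 fun hle => h.not_ge (sInf_le hle), fun h => ?_⟩
  obtain ⟨u, hsu, hu⟩ := exists_gt_lt_measure_of_lt_measure h
  refine hsu.trans_le (le_sInf fun σ hσ => le_of_not_gt fun hσu => ?_)
  exact (hu.trans_le (measure_mono fun x hx => hσu.trans hx)).not_ge hσ

theorem antitone_decreasingRearrangement (μ : Measure α) (g : α → ℝ≥0∞) :
    Antitone (decreasingRearrangement μ g) :=
  fun _ _ hst => sInf_le_sInf fun _ hσ => hσ.trans hst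

theorem decreasingRearrangement_orderIso_comp (μ : Measure α) (e : ℝ≥0∞ ≃o ℝ≥0∞) (g : α → ℝ≥0∞)
    (t : ℝ≥0∞) :
    decreasingRearrangement μ (fun x => e (g x)) t = e (decreasingRearrangement μ g t) :=
  eq_of_forall_lt_iff fun s => by
    simp only [lt_decreasingRearrangement_iff, ← e.symm_apply_lt]

theorem decreasingRearrangement_add_measure_le (μ : Measure α) (g : α → ℝ≥0∞) {E : Set α}
    (hE : MeasurableSet E) (t : ℝ≥0∞) :
    decreasingRearrangement μ g (t + μ E) ≤ decreasingRearrangement (μ.restrict Eᶜ) g t := by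
  refine le_of_forall_lt fun s hs => ?_
  rw [lt_decreasingRearrangement_iff] at hs ⊢
  rw [Measure.restrict_apply' hE.compl, ← sdiff_eq]
  refine lt_of_add_lt_add_right (hs.trans_le ?_)
  calc μ {x | s < g x} ≤ μ ({x | s < g x} \ E ∪ E) := measure_mono fun x hx => by
        by_cases hxE : x ∈ E <;> simp_all
    _ ≤ μ ({x | s < g x} \ E) + μ E := measure_union_le _ _

theorem measurable_decreasingRearrangement (μ : Measure α) [SFinite μ] {f : α → β → ℝ≥0∞}
    (hf : Measurable (Function.uncurry f)) :
    Measurable fun z : ℝ≥0∞ × β => decreasingRearrangement μ (fun x => f x z.2) z.1 := by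
  refine measurable_of_Ioi fun s => ?_
  have hdistr : Measurable fun y => μ {x | s < f x y} :=
    measurable_measure_prodMk_right (measurableSet_lt measurable_const hf)
  simp only [preimage, mem_Ioi, lt_decreasingRearrangement_iff]
  exact measurableSet_lt measurable_fst (hdistr.comp measurable_snd)

theorem volume_restrict_Ioi_zero_ofReal_lt (a : ℝ≥0∞) :
    volume.restrict (Ioi (0 : ℝ)) {t | ENNReal.ofReal t < a} = a := by
  rw [Measure.restrict_apply' measurableSet_Ioi]
  induction a with
  | top => simp
  | coe a =>
    have hIoo : {t | ENNReal.ofReal t < a} ∩ Ioi 0 = Ioo (0 : ℝ) a := by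
      ext t
      simp only [mem_inter_iff, mem_ofPred_eq, mem_Ioi, mem_Ioo, and_comm (b := 0 < t)]
      exact and_congr_right fun ht => by
        rw [← ENNReal.ofReal_coe_nnreal, ENNReal.ofReal_lt_ofReal_iff_of_nonneg ht.le]
    simp [hIoo]

theorem lintegral_eq_lintegral_measure_ofReal_lt (μ : Measure α) [SFinite μ] {g : α → ℝ≥0∞}
    (hg : Measurable g) :
    ∫⁻ x, g x ∂μ = ∫⁻ s in Ioi (0 : ℝ), μ {x | ENNReal.ofReal s < g x} := by
  have hsub : MeasurableSet {z : α × ℝ | ENNReal.ofReal z.2 < g z.1} :=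
    measurableSet_lt (by fun_prop) (by fun_prop)
  calc ∫⁻ x, g x ∂μ
      = ∫⁻ x, volume.restrict (Ioi (0 : ℝ)) {s | ENNReal.ofReal s < g x} ∂μ := by
        simp only [volume_restrict_Ioi_zero_ofReal_lt]
    _ = μ.prod (volume.restrict (Ioi 0)) {z | ENNReal.ofReal z.2 < g z.1} :=
        (Measure.prod_apply hsub).symm
    _ = ∫⁻ s in Ioi (0 : ℝ), μ {x | ENNReal.ofReal s < g x} := Measure.prod_apply_symm hsub

theorem lintegral_decreasingRearrangement (μ : Measure α) [SFinite μ] {g : α → ℝ≥0∞}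
    (hg : Measurable g) :
    ∫⁻ t in Ioi (0 : ℝ), decreasingRearrangement μ g (ENNReal.ofReal t) = ∫⁻ x, g x ∂μ := by
  have hrearr : Measurable fun t => decreasingRearrangement μ g (ENNReal.ofReal t) :=
    (antitone_decreasingRearrangement μ g).measurable.comp ENNReal.measurable_ofReal
  rw [lintegral_eq_lintegral_measure_ofReal_lt _ hrearr,
    lintegral_eq_lintegral_measure_ofReal_lt μ hg]
  simp only [lt_decreasingRearrangement_iff, volume_restrict_Ioi_zero_ofReal_lt]

theorem setLIntegral_Ioi_decreasingRearrangement_le (μ : Measure α) [SFinite μ] {g : α → ℝ≥0∞}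
    (hg : Measurable g) {E : Set α} (hE : MeasurableSet E) (hE_fin : μ E ≠ ⊤) :
    ∫⁻ t in Ioi (μ E).toReal, decreasingRearrangement μ g (ENNReal.ofReal t)
      ≤ ∫⁻ x in Eᶜ, g x ∂μ := by
  calc ∫⁻ t in Ioi (μ E).toReal, decreasingRearrangement μ g (ENNReal.ofReal t)
      = ∫⁻ t in Ioi 0, decreasingRearrangement μ g (ENNReal.ofReal (t + (μ E).toReal)) := by
        rw [← (measurePreserving_add_right volume (μ E).toReal).setLIntegral_comp_preimage_emb
          (measurableEmbedding_addRight _)]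
        simp
    _ = ∫⁻ t in Ioi 0, decreasingRearrangement μ g (ENNReal.ofReal t + μ E) :=
        setLIntegral_congr_fun measurableSet_Ioi fun t ht => by
          simp only [ENNReal.ofReal_add (le_of_lt ht) ENNReal.toReal_nonneg,
            ENNReal.ofReal_toReal hE_fin]
    _ ≤ ∫⁻ t in Ioi (0 : ℝ), decreasingRearrangement (μ.restrict Eᶜ) g (ENNReal.ofReal t) :=
        lintegral_mono fun t => decreasingRearrangement_add_measure_le μ g hE _
    _ = ∫⁻ x in Eᶜ, g x ∂μ := lintegral_decreasingRearrangement _ hg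

variable (μ : Measure α) [SFinite μ] (ν : Measure β) [SFinite ν] {f : α → β → ℝ≥0∞}

theorem measurable_lintegral_decreasingRearrangement (hf : Measurable (Function.uncurry f)) :
    Measurable fun t => ∫⁻ y, decreasingRearrangement μ (f · y) t ∂ν :=
  (measurable_decreasingRearrangement μ hf).lintegral_prod_right'

theorem setLIntegral_Ioi_lintegral_decreasingRearrangement_le
    (hf : Measurable (Function.uncurry f)) {E : Set α} (hE : MeasurableSet E) (hE_fin : μ E ≠ ⊤) :
    ∫⁻ t in Ioi (μ E).toReal, ∫⁻ y, decreasingRearrangement μ (f · y) (ENNReal.ofReal t) ∂ν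
      ≤ ∫⁻ x in Eᶜ, ∫⁻ y, f x y ∂ν ∂μ := by
  have hrearr : Measurable fun z : ℝ × β =>
      decreasingRearrangement μ (f · z.2) (ENNReal.ofReal z.1) :=
    (measurable_decreasingRearrangement μ hf).comp
      (measurable_fst.ennreal_ofReal.prodMk measurable_snd)
  rw [lintegral_lintegral_swap hrearr.aemeasurable, lintegral_lintegral_swap hf.aemeasurable]
  exact lintegral_mono fun y => setLIntegral_Ioi_decreasingRearrangement_le μ
    (hf.comp measurable_prodMk_right) hE hE_fin

theorem lintegral_min_lintegral_decreasingRearrangement_le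
    (hf : Measurable (Function.uncurry f)) (u : ℝ≥0∞) :
    ∫⁻ t in Ioi (0 : ℝ),
        min (∫⁻ y, decreasingRearrangement μ (f · y) (ENNReal.ofReal t) ∂ν) u
      ≤ ∫⁻ x, min (∫⁻ y, f x y ∂ν) u ∂μ := by
  set G : ℝ → ℝ≥0∞ := fun t => ∫⁻ y, decreasingRearrangement μ (f · y) (ENNReal.ofReal t) ∂ν
  set g : α → ℝ≥0∞ := fun x => ∫⁻ y, f x y ∂ν
  have hg : Measurable g := hf.lintegral_prod_right'
  set E : Set α := {x | u < g x}
  have hE : MeasurableSet E := measurableSet_lt measurable_const hg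
  have hsplit : u * μ E + ∫⁻ x in Eᶜ, g x ∂μ = ∫⁻ x, min (g x) u ∂μ := by
    rw [← lintegral_add_compl (fun x => min (g x) u) hE, ← setLIntegral_const]
    congr 1
    · exact setLIntegral_congr_fun hE fun x hx => (min_eq_right (le_of_lt hx)).symm
    · exact setLIntegral_congr_fun hE.compl fun x hx => (min_eq_left (by simpa [E] using hx)).symm
  rcases eq_or_ne u 0 with rfl | hu
  · simp
  rcases eq_or_ne (μ E) ⊤ with hE_top | hE_fin
  · rw [← hsplit, hE_top, ENNReal.mul_top hu, top_add]
    exact le_top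
  calc ∫⁻ t in Ioi (0 : ℝ), min (G t) u
      = (∫⁻ t in Ioc 0 (μ E).toReal, min (G t) u) + ∫⁻ t in Ioi (μ E).toReal, min (G t) u := by
        rw [← Ioc_union_Ioi_eq_Ioi ENNReal.toReal_nonneg,
          lintegral_union measurableSet_Ioi (Ioc_disjoint_Ioi le_rfl)]
    _ ≤ (∫⁻ _ in Ioc 0 (μ E).toReal, u) + ∫⁻ t in Ioi (μ E).toReal, G t := by
        gcongr
        exacts [min_le_right _ _, min_le_left _ _]
    _ = u * μ E + ∫⁻ t in Ioi (μ E).toReal, G t := by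
        simp [ENNReal.ofReal_toReal hE_fin]
    _ ≤ u * μ E + ∫⁻ x in Eᶜ, g x ∂μ := by
        gcongr
        exact setLIntegral_Ioi_lintegral_decreasingRearrangement_le μ ν hf hE hE_fin
    _ = ∫⁻ x, min (g x) u ∂μ := hsplit

end Rearrangement

section Truncation

theorem lintegral_Ioc_zero_rpow {s a : ℝ} (hs : -1 < s) (ha : 0 ≤ a) :
    ∫⁻ u in Ioc 0 a, ENNReal.ofReal (u ^ s) = ENNReal.ofReal (a ^ (s + 1) / (s + 1)) := by
  rw [← ofReal_integral_eq_lintegral_ofReal, ← intervalIntegral.integral_of_le ha,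
    integral_rpow (Or.inl hs), Real.zero_rpow (by linarith), sub_zero]
  · exact (intervalIntegrable_iff_integrableOn_Ioc_of_le ha).1
      (intervalIntegral.intervalIntegrable_rpow' hs)
  · exact ae_restrict_of_forall_mem measurableSet_Ioc fun u hu => Real.rpow_nonneg hu.1.le s

theorem lintegral_Ioi_rpow_of_lt {s a : ℝ} (hs : s < -1) (ha : 0 < a) :
    ∫⁻ u in Ioi a, ENNReal.ofReal (u ^ s) = ENNReal.ofReal (-a ^ (s + 1) / (s + 1)) := by
  rw [← ofReal_integral_eq_lintegral_ofReal, integral_Ioi_rpow_of_lt hs ha]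
  · exact integrableOn_Ioi_rpow_of_lt hs ha
  · exact ae_restrict_of_forall_mem measurableSet_Ioi fun u hu =>
      Real.rpow_nonneg (ha.trans hu).le s

theorem lintegral_Ioi_zero_rpow (s : ℝ) : ∫⁻ u in Ioi (0 : ℝ), ENNReal.ofReal (u ^ s) = ⊤ := by
  by_contra h
  refine not_integrableOn_Ioi_rpow s ((lintegral_ofReal_ne_top_iff_integrable ?_ ?_).1 h)
  · exact (measurable_id.pow_const s).aestronglyMeasurable
  · exact ae_restrict_of_forall_mem measurableSet_Ioi fun u hu => Real.rpow_nonneg (le_of_lt hu) s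

theorem ofReal_mul_ofReal_rpow {u : ℝ} (hu : 0 < u) (s : ℝ) :
    ENNReal.ofReal u * ENNReal.ofReal (u ^ s) = ENNReal.ofReal (u ^ (s + 1)) := by
  rw [← ENNReal.ofReal_mul hu.le, Real.rpow_add_one hu.ne', mul_comm]

variable {r : ℝ}

theorem lintegral_min_ofReal_mul_rpow_sub_two (hr₀ : 0 < r) (hr₁ : r < 1) {a : ℝ} (ha : 0 < a) :
    ∫⁻ u in Ioi (0 : ℝ), min (ENNReal.ofReal a) (ENNReal.ofReal u) * ENNReal.ofReal (u ^ (r - 2))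
      = ENNReal.ofReal (r * (1 - r))⁻¹ * ENNReal.ofReal a ^ r := by
  have hr₁' : 0 < 1 - r := sub_pos.2 hr₁
  have below : ∫⁻ u in Ioc 0 a,
      min (ENNReal.ofReal a) (ENNReal.ofReal u) * ENNReal.ofReal (u ^ (r - 2))
        = ENNReal.ofReal (a ^ r / r) := by
    calc _ = ∫⁻ u in Ioc 0 a, ENNReal.ofReal (u ^ (r - 2 + 1)) :=
          setLIntegral_congr_fun measurableSet_Ioc fun u hu => by
            simp only [min_eq_right (ENNReal.ofReal_le_ofReal hu.2), ofReal_mul_ofReal_rpow hu.1]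
      _ = ENNReal.ofReal (a ^ r / r) := by
          rw [lintegral_Ioc_zero_rpow (by linarith) ha.le, show r - 2 + 1 + 1 = r by ring]
  have above : ∫⁻ u in Ioi a,
      min (ENNReal.ofReal a) (ENNReal.ofReal u) * ENNReal.ofReal (u ^ (r - 2))
        = ENNReal.ofReal (a ^ r / (1 - r)) := by
    calc _ = ∫⁻ u in Ioi a, ENNReal.ofReal a * ENNReal.ofReal (u ^ (r - 2)) :=
          setLIntegral_congr_fun measurableSet_Ioi fun u hu => by
            simp only [min_eq_left (ENNReal.ofReal_le_ofReal (le_of_lt hu))]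
      _ = ENNReal.ofReal a * ENNReal.ofReal (-a ^ (r - 2 + 1) / (r - 2 + 1)) := by
          rw [lintegral_const_mul _ (by fun_prop), lintegral_Ioi_rpow_of_lt (by linarith) ha]
      _ = ENNReal.ofReal (a ^ r / (1 - r)) := by
          rw [← ENNReal.ofReal_mul ha.le, show r - 2 + 1 = r - 1 by ring,
            Real.rpow_sub_one ha.ne', ← neg_sub 1 r]
          field_simp
  rw [← Ioc_union_Ioi_eq_Ioi ha.le, lintegral_union measurableSet_Ioi (Ioc_disjoint_Ioi le_rfl),
    below, above, ENNReal.ofReal_rpow_of_pos ha, ← ENNReal.ofReal_mul (by positivity),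
    ← ENNReal.ofReal_add (by positivity) (by positivity)]
  congr 1
  field_simp
  ring

theorem lintegral_min_mul_rpow_sub_two (hr₀ : 0 < r) (hr₁ : r < 1) (a : ℝ≥0∞) :
    ∫⁻ u in Ioi (0 : ℝ), min a (ENNReal.ofReal u) * ENNReal.ofReal (u ^ (r - 2))
      = ENNReal.ofReal (r * (1 - r))⁻¹ * a ^ r := by
  rcases eq_or_ne a ⊤ with rfl | ha_top
  · have hr : 0 < r * (1 - r) := mul_pos hr₀ (sub_pos.2 hr₁)
    rw [ENNReal.top_rpow_of_pos hr₀, ENNReal.mul_top (ENNReal.ofReal_pos.2 (inv_pos.2 hr)).ne']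
    refine Eq.trans ?_ (lintegral_Ioi_zero_rpow (r - 2 + 1))
    exact setLIntegral_congr_fun measurableSet_Ioi fun u hu => by
      simp only [min_top_left, ofReal_mul_ofReal_rpow hu]
  rcases eq_or_ne a 0 with rfl | ha_zero
  · simp [ENNReal.zero_rpow_of_pos hr₀]
  · rw [← ENNReal.ofReal_toReal ha_top]
    exact lintegral_min_ofReal_mul_rpow_sub_two hr₀ hr₁ (ENNReal.toReal_pos ha_zero ha_top)

variable {α β : Type*} [MeasurableSpace α] [MeasurableSpace β]

theorem mul_lintegral_rpow_eq_lintegral_lintegral_min (hr₀ : 0 < r) (hr₁ : r < 1) (μ : Measure α)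
    [SFinite μ] {g : α → ℝ≥0∞} (hg : Measurable g) :
    ENNReal.ofReal (r * (1 - r))⁻¹ * ∫⁻ x, g x ^ r ∂μ
      = ∫⁻ u in Ioi (0 : ℝ),
          (∫⁻ x, min (g x) (ENNReal.ofReal u) ∂μ) * ENNReal.ofReal (u ^ (r - 2)) := by
  have hmeas : Measurable fun z : α × ℝ =>
      min (g z.1) (ENNReal.ofReal z.2) * ENNReal.ofReal (z.2 ^ (r - 2)) := by fun_prop
  calc ENNReal.ofReal (r * (1 - r))⁻¹ * ∫⁻ x, g x ^ r ∂μ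
      = ∫⁻ x, (∫⁻ u in Ioi (0 : ℝ),
          min (g x) (ENNReal.ofReal u) * ENNReal.ofReal (u ^ (r - 2))) ∂μ := by
        rw [← lintegral_const_mul _ (hg.pow_const r)]
        simp only [lintegral_min_mul_rpow_sub_two hr₀ hr₁]
    _ = ∫⁻ u in Ioi (0 : ℝ), ∫⁻ x,
          min (g x) (ENNReal.ofReal u) * ENNReal.ofReal (u ^ (r - 2)) ∂μ :=
        lintegral_lintegral_swap hmeas.aemeasurable
    _ = _ := lintegral_congr fun u => lintegral_mul_const _ (by fun_prop)

theorem lintegral_rpow_le_of_lintegral_min_le (hr₀ : 0 < r) (hr₁ : r ≤ 1) {μ : Measure α}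
    [SFinite μ] {ν : Measure β} [SFinite ν] {g : α → ℝ≥0∞} {h : β → ℝ≥0∞} (hg : Measurable g)
    (hh : Measurable h) (hmin : ∀ u, ∫⁻ x, min (g x) u ∂μ ≤ ∫⁻ y, min (h y) u ∂ν) :
    ∫⁻ x, g x ^ r ∂μ ≤ ∫⁻ y, h y ^ r ∂ν := by
  rcases hr₁.eq_or_lt with rfl | hr₁
  · simpa using hmin ⊤
  have hr : 0 < r * (1 - r) := mul_pos hr₀ (sub_pos.2 hr₁)
  rw [← ENNReal.mul_le_mul_iff_right (ENNReal.ofReal_pos.2 (inv_pos.2 hr)).ne'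
    ENNReal.ofReal_ne_top, mul_lintegral_rpow_eq_lintegral_lintegral_min hr₀ hr₁ μ hg,
    mul_lintegral_rpow_eq_lintegral_lintegral_min hr₀ hr₁ ν hh]
  gcongr with u
  exact hmin _

end Truncation

theorem ofReal_rearr_le_decreasingRearrangement (g : ℝ → ℝ) (t : ℝ) :
    ENNReal.ofReal (rearr g t) ≤ decreasingRearrangement (volume.restrict (Icc 0 1))
      (fun x => ENNReal.ofReal |g x|) (ENNReal.ofReal t) := by
  refine le_sInf fun σ hσ => ?_
  induction σ with
  | top => exact le_top
  | coe s =>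
    rw [mem_ofPred_eq, Measure.restrict_apply' measurableSet_Icc, inter_comm] at hσ
    simp only [← ENNReal.ofReal_coe_nnreal,
      ENNReal.ofReal_lt_ofReal_iff_of_nonneg s.coe_nonneg] at hσ ⊢
    exact ENNReal.ofReal_le_ofReal (csInf_le ⟨0, fun _ h => h.1⟩ ⟨s.coe_nonneg, hσ⟩)

theorem lintegral_rpow_lintegral_rearr1_le (f : ℝ → ℝ → ℝ) {q r : ℝ} (hq : 0 ≤ q) (hr : 0 ≤ r) :
    ∫⁻ t in Icc (0 : ℝ) 1, (∫⁻ y in Icc (0 : ℝ) 1, ENNReal.ofReal (rearr1 f t y) ^ q) ^ r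
      ≤ ∫⁻ t in Ioi (0 : ℝ), (∫⁻ y in Icc (0 : ℝ) 1,
          decreasingRearrangement (volume.restrict (Icc 0 1)) (fun x => ENNReal.ofReal |f x y|)
            (ENNReal.ofReal t) ^ q) ^ r := by
  have hIcc : Icc (0 : ℝ) 1 ≤ᵐ[volume] Ioi 0 :=
    Ioc_ae_eq_Icc.symm.le.trans Ioc_subset_Ioi_self.eventuallyLE
  refine (lintegral_mono_set' hIcc).trans (lintegral_mono fun t => ?_)
  gcongr with y
  exact ofReal_rearr_le_decreasingRearrangement (f · y) t

theorem stmt_2_general {α β : Type*} [MeasurableSpace α] [MeasurableSpace β] (μ : Measure α)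
    [SFinite μ] (ν : Measure β) [SFinite ν] {p q : ℝ} (hp : 0 < p) (hpq : p ≤ q)
    {f : α → β → ℝ≥0∞} (hf : Measurable (Function.uncurry f)) :
    (∫⁻ t in Ioi (0 : ℝ),
        (∫⁻ y, decreasingRearrangement μ (f · y) (ENNReal.ofReal t) ^ q ∂ν) ^ (p / q)) ^ (1 / p)
      ≤ (∫⁻ x, (∫⁻ y, f x y ^ q ∂ν) ^ (p / q) ∂μ) ^ (1 / p) := by
  have hq : 0 < q := hp.trans_le hpq
  have hfq : Measurable (Function.uncurry fun x y => f x y ^ q) := hf.pow_const q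
  have hrearr (t : ℝ≥0∞) (y : β) : decreasingRearrangement μ (f · y) t ^ q
      = decreasingRearrangement μ (fun x => f x y ^ q) t :=
    (decreasingRearrangement_orderIso_comp μ (ENNReal.orderIsoRpow q hq) (f · y) t).symm
  simp only [hrearr]
  refine ENNReal.rpow_le_rpow ?_ (by positivity)
  exact lintegral_rpow_le_of_lintegral_min_le (div_pos hp hq) ((div_le_one hq).2 hpq)
    ((measurable_lintegral_decreasingRearrangement μ ν hfq).comp ENNReal.measurable_ofReal)
    hfq.lintegral_prod_right' (lintegral_min_lintegral_decreasingRearrangement_le μ ν hfq)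

/-- Minkowski-type inequality (part a): for `0 < p ≤ q < ∞`,
`(∫₀¹(∫₀¹ |f(x₁,x₂)|^q dx₂)^{p/q} dx₁)^{1/p}
  ≥ (∫₀¹(∫₀¹ (f^{*₁}(t₁,x₂))^q dx₂)^{p/q} dt₁)^{1/p}`. -/
theorem stmt_2 (p q : ℝ) (hp : 0 < p) (hpq : p ≤ q)
    (f : ℝ → ℝ → ℝ) (hf : Measurable (Function.uncurry f)) :
    (∫⁻ t₁ in Icc (0:ℝ) 1,
        (∫⁻ x₂ in Icc (0:ℝ) 1, ENNReal.ofReal (rearr1 f t₁ x₂) ^ q) ^ (p / q)) ^ (1 / p)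
      ≤ (∫⁻ x₁ in Icc (0:ℝ) 1,
        (∫⁻ x₂ in Icc (0:ℝ) 1, ENNReal.ofReal |f x₁ x₂| ^ q) ^ (p / q)) ^ (1 / p) := by
  exact (ENNReal.rpow_le_rpow (lintegral_rpow_lintegral_rearr1_le f (hp.le.trans hpq)
    (div_nonneg hp.le (hp.le.trans hpq))) (one_div_nonneg.2 hp.le)).trans
    (stmt_2_general _ _ hp hpq hf.abs.ennreal_ofReal)
end

section
/- Let f ∈ L¹([0,1]²). Then for all N₁, N₂ ∈ ℕ one has S(N₁,N₂) ≤ 2 max(1,M₁) max(1,M₂) · inf{ (N₁N₂)^{1/2} ‖f₀₀‖_{L_{(1,1)}} + N₂^{1/2} ‖f₁₀‖_{L_{(2,1)}} + N₁^{1/2} ‖f₀₁‖_{L_{(1,2)}} + ‖f₁₁‖_{L_{(2,2)}} }, where the infimum is over all decompositions f = f₀₀ + f₁₀ + f₀₁ + f₁₁ into measurable functions with finite respective mixed norms. -/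
open MeasureTheory Set ENNReal

/-- The mixed-norm Lebesgue (quasi-)norm on `[0,1]²`:
`‖f‖_{L_{(p₁,p₂)}} = (∫₀¹(∫₀¹|f(x₁,x₂)|^{p₁} dx₁)^{p₂/p₁} dx₂)^{1/p₂}`. -/
noncomputable def mixedNorm (p₁ p₂ : ℝ) (f : ℝ → ℝ → ℂ) : ℝ≥0∞ :=
  (∫⁻ x₂ in Icc (0:ℝ) 1,
      (∫⁻ x₁ in Icc (0:ℝ) 1, (‖f x₁ x₂‖₊ : ℝ≥0∞) ^ p₁) ^ (p₂ / p₁)) ^ (1 / p₂)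

/-- `φ` is an orthonormal system in `L²[0,1]`. -/
def OrthonormalOn01 (φ : ℕ → ℝ → ℂ) : Prop :=
  ∀ m n : ℕ,
    ∫ x in Icc (0:ℝ) 1, φ m x * (starRingEnd ℂ) (φ n x) = if m = n then 1 else 0

/-- The Fourier coefficients of `f` with respect to the product system
`φ_{k₁}(x₁) ψ_{k₂}(x₂)`. -/
noncomputable def coeff (φ ψ : ℕ → ℝ → ℂ) (f : ℝ → ℝ → ℂ) (k₁ k₂ : ℕ) : ℂ :=
  ∫ x₂ in Icc (0:ℝ) 1, ∫ x₁ in Icc (0:ℝ) 1,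
    f x₁ x₂ * (starRingEnd ℂ) (φ k₁ x₁) * (starRingEnd ℂ) (ψ k₂ x₂)


/-- `S(N₁,N₂)`: the supremum of `(Σ_{m₁∈e} Σ_{m₂∈ω(m₁)} |a_{m₁m₂}|²)^{1/2}` over all
finite `e ⊂ ℕ` with `card e = N₁` and all families `ω` with `card ω(m₁) = N₂`. -/
noncomputable def Ssup (a : ℕ → ℕ → ℂ) (N₁ N₂ : ℕ) : ℝ≥0∞ :=
  ⨆ (e : Finset ℕ) (_ : e.card = N₁) (ω : ℕ → Finset ℕ)
    (_ : ∀ m₁ ∈ e, (ω m₁).card = N₂),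
      (∑ m₁ ∈ e, ∑ m₂ ∈ ω m₁, (‖a m₁ m₂‖₊ : ℝ≥0∞) ^ (2:ℝ)) ^ ((1:ℝ)/2)

/-!
For a system bounded by `M`, the coefficient map over `N` indices is bounded from `L¹` to `ℓ²` with
norm at most `M √N`; for an orthonormal system it is bounded from `L²` to `ℓ²` with norm at most `1`
(Bessel). Minkowski's inequality, in the form `ℓ²(L^q) ≤ L^q(ℓ²)` for `q ≤ 2`, allows these bounds
in the two variables to be composed, for each of the four pairs `(p, q)` of exponents in `{1, 2}`;
the pieces of a decomposition of `f` are then added by the triangle inequality.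
-/

open scoped NNReal ComplexConjugate

section Minkowski

variable {ι X : Type*} [MeasurableSpace X] {μ : Measure X} {s : Finset ι} {r : ℝ}

theorem rpow_sub_one_mul_self (hr : 1 ≤ r) (a : ℝ≥0∞) : a ^ (r - 1) * a = a ^ r := by
  conv_lhs => rw [← ENNReal.rpow_one a]
  rw [← ENNReal.rpow_mul, ← ENNReal.rpow_add_of_nonneg _ _ (by linarith) one_pos.le]
  simp

theorem sum_rpow_sub_one_mul_le (hr : 1 < r) (a b : ι → ℝ≥0∞) :
    ∑ i ∈ s, a i ^ (r - 1) * b i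
      ≤ ((∑ i ∈ s, a i ^ r) ^ (1 / r)) ^ (r - 1) * (∑ i ∈ s, b i ^ r) ^ (1 / r) := by
  have hconj : r.conjExponent.HolderConjugate r := (Real.HolderConjugate.conjExponent hr).symm
  have hexp : (r - 1) * r.conjExponent = r := hconj.symm.sub_one_mul_conj
  have hinv : 1 / r.conjExponent = 1 / r * (r - 1) := by
    rw [Real.conjExponent]; field_simp
  refine (ENNReal.inner_le_Lp_mul_Lq s _ b hconj).trans_eq ?_
  simp only [← ENNReal.rpow_mul, hexp, hinv]

theorem rpow_sum_rpow_lintegral_le_lintegral (hr : 1 ≤ r) {u : ι → X → ℝ≥0∞}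
    (hu : ∀ i ∈ s, AEMeasurable (u i) μ) :
    (∑ i ∈ s, (∫⁻ x, u i x ∂μ) ^ r) ^ (1 / r) ≤ ∫⁻ x, (∑ i ∈ s, u i x ^ r) ^ (1 / r) ∂μ := by
  rcases hr.eq_or_lt with rfl | hr
  · simp [lintegral_finsetSum' s hu]
  have hr0 : 0 < r := by linarith
  set A : ι → ℝ≥0∞ := fun i ↦ ∫⁻ x, u i x ∂μ
  set R := ∫⁻ x, (∑ i ∈ s, u i x ^ r) ^ (1 / r) ∂μ
  set T := (∑ i ∈ s, A i ^ r) ^ (1 / r)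
  rcases eq_or_ne R ⊤ with hR | hR
  · simp [hR]
  rcases eq_or_ne T 0 with hT0 | hT0
  · simp [hT0]
  have hA : ∀ i ∈ s, A i ≠ ⊤ := fun i hi ↦ ne_top_of_le_ne_top hR <| lintegral_mono fun x ↦ by
    rw [one_div, ENNReal.le_rpow_inv_iff hr0]
    exact Finset.single_le_sum (f := fun i ↦ u i x ^ r) (fun _ _ ↦ zero_le) hi
  have hT : T ≠ ⊤ := ENNReal.rpow_ne_top_of_nonneg (by positivity) <|
    ENNReal.sum_ne_top.2 fun i hi ↦ ENNReal.rpow_ne_top_of_nonneg hr0.le (hA i hi)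
  have hTr : T ^ (r - 1) ≠ ⊤ := ENNReal.rpow_ne_top_of_nonneg (by linarith) hT
  -- Both sides carry the factor `T ^ (r - 1)` that Hölder's inequality produces.
  have key : T ^ (r - 1) * T ≤ T ^ (r - 1) * R := calc
    T ^ (r - 1) * T = ∑ i ∈ s, A i ^ (r - 1) * A i := by
      simp only [rpow_sub_one_mul_self hr.le, T]
      rw [← ENNReal.rpow_mul, one_div_mul_cancel hr0.ne', ENNReal.rpow_one]
    _ = ∫⁻ x, ∑ i ∈ s, A i ^ (r - 1) * u i x ∂μ := by
      rw [lintegral_finsetSum' s fun i hi ↦ (hu i hi).const_mul _]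
      exact Finset.sum_congr rfl fun i hi ↦ (lintegral_const_mul'' _ (hu i hi)).symm
    _ ≤ ∫⁻ x, T ^ (r - 1) * (∑ i ∈ s, u i x ^ r) ^ (1 / r) ∂μ :=
      lintegral_mono fun x ↦ sum_rpow_sub_one_mul_le hr A (u · x)
    _ = T ^ (r - 1) * R := lintegral_const_mul' _ _ hTr
  exact (ENNReal.mul_le_mul_iff_right (ENNReal.rpow_pos (pos_iff_ne_zero.2 hT0) hT).ne' hTr).1 key

end Minkowski

section l2Norm

variable {ι X ε : Type*} [MeasurableSpace X] {μ : Measure X} {s : Finset ι}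

/-- The `ℓ²` norm of the family `a` over the finite index set `s`, with values in `[0, ∞]`. -/
noncomputable def l2Norm [ENorm ε] (s : Finset ι) (a : ι → ε) : ℝ≥0∞ :=
  (∑ i ∈ s, ‖a i‖ₑ ^ (2 : ℝ)) ^ (1 / 2 : ℝ)

theorem l2Norm_mono {ε' : Type*} [ENorm ε] [ENorm ε'] {a : ι → ε} {b : ι → ε'}
    (h : ∀ i ∈ s, ‖a i‖ₑ ≤ ‖b i‖ₑ) : l2Norm s a ≤ l2Norm s b := by
  unfold l2Norm
  gcongr with i hi
  exact h i hi

theorem enorm_le_l2Norm [ENorm ε] (a : ι → ε) {i : ι} (hi : i ∈ s) : ‖a i‖ₑ ≤ l2Norm s a := by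
  rw [l2Norm, one_div, ENNReal.le_rpow_inv_iff two_pos]
  exact Finset.single_le_sum (f := fun i ↦ ‖a i‖ₑ ^ (2 : ℝ)) (fun _ _ ↦ zero_le) hi

theorem l2Norm_add_le [TopologicalSpace ε] [ESeminormedAddMonoid ε] (a b : ι → ε) :
    l2Norm s (a + b) ≤ l2Norm s a + l2Norm s b := calc
  l2Norm s (a + b) ≤ (∑ i ∈ s, (‖a i‖ₑ + ‖b i‖ₑ) ^ (2 : ℝ)) ^ (1 / 2 : ℝ) := by
    unfold l2Norm
    gcongr
    exact enorm_add_le _ _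
  _ ≤ l2Norm s a + l2Norm s b := ENNReal.Lp_add_le s _ _ one_le_two

theorem l2Norm_const_mul (c : ℝ≥0∞) (a : ι → ℝ≥0∞) :
    l2Norm s (fun i ↦ c * a i) = c * l2Norm s a := by
  simp only [l2Norm, enorm_eq_self, ENNReal.mul_rpow_of_nonneg _ _ zero_le_two,
    ← Finset.mul_sum, ENNReal.mul_rpow_of_nonneg _ _ (one_half_pos (α := ℝ)).le,
    ← ENNReal.rpow_mul]
  simp

theorem l2Norm_const (c : ℝ≥0∞) :
    l2Norm s (fun _ ↦ c) = (s.card : ℝ≥0∞) ^ (1 / 2 : ℝ) * c := by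
  rw [l2Norm, Finset.sum_const, nsmul_eq_mul, ENNReal.mul_rpow_of_nonneg _ _ (by positivity),
    ← ENNReal.rpow_mul]
  simp

theorem l2Norm_l2Norm {κ : Type*} [ENorm ε] (ω : ι → Finset κ) (a : ι → κ → ε) :
    l2Norm s (fun i ↦ l2Norm (ω i) (a i))
      = (∑ i ∈ s, ∑ j ∈ ω i, ‖a i j‖ₑ ^ (2 : ℝ)) ^ (1 / 2 : ℝ) := by
  simp only [l2Norm, enorm_eq_self, ← ENNReal.rpow_mul]
  simp

theorem l2Norm_eLpNorm_le_eLpNorm_l2Norm [TopologicalSpace ε] [ContinuousENorm ε]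
    {q : ℝ≥0∞} (hq : q ≤ 2) {u : ι → X → ε} (hu : ∀ i ∈ s, AEStronglyMeasurable (u i) μ) :
    l2Norm s (fun i ↦ eLpNorm (u i) q μ) ≤ eLpNorm (fun x ↦ l2Norm s (u · x)) q μ := by
  rcases eq_or_ne q 0 with rfl | hq0
  · simp [l2Norm]
  have hqt : q ≠ ⊤ := ne_top_of_le_ne_top ENNReal.ofNat_ne_top hq
  have ht : 0 < q.toReal := ENNReal.toReal_pos hq0 hqt
  have one_le_two_div : 1 ≤ 2 / q.toReal := by
    rw [one_le_div ht]
    exact ENNReal.toReal_mono ENNReal.ofNat_ne_top hq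
  -- Minkowski's inequality in `ℓ^{2/q}` for the functions `‖u i‖ ^ q`.
  have minkowski := rpow_sum_rpow_lintegral_le_lintegral (s := s) (μ := μ) one_le_two_div
    (u := fun i x ↦ ‖u i x‖ₑ ^ q.toReal) fun i hi ↦ (hu i hi).enorm.pow_const _
  simp only [l2Norm, eLpNorm_eq_lintegral_rpow_enorm_toReal hq0 hqt, enorm_eq_self,
    ← ENNReal.rpow_mul] at minkowski ⊢
  rw [one_div q.toReal, ENNReal.le_rpow_inv_iff ht, ← ENNReal.rpow_mul]
  convert minkowski using 3 <;> field_simp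

end l2Norm

section Coefficients

variable {𝕜 ι X : Type*} [RCLike 𝕜] [MeasurableSpace X] {μ : Measure X}
  {φ : ι → X → 𝕜} {s : Finset ι} {p : ℝ≥0∞}

/-- The Fourier coefficients `∫ h conj(φᵢ) dμ` of `h` with respect to the system `φ`. -/
noncomputable def systemCoeff (μ : Measure X) (φ : ι → X → 𝕜) (h : X → 𝕜) (i : ι) : 𝕜 :=
  ∫ x, h x * conj (φ i x) ∂μ

theorem systemCoeff_congr_ae {h k : X → 𝕜} (hk : h =ᵐ[μ] k) (i : ι) :
    systemCoeff μ φ h i = systemCoeff μ φ k i :=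
  integral_congr_ae (hk.mono fun x hx ↦ by simp only [hx])

theorem systemCoeff_add {h k : X → 𝕜} {i : ι} (hh : Integrable (fun x ↦ h x * conj (φ i x)) μ)
    (hk : Integrable (fun x ↦ k x * conj (φ i x)) μ) :
    systemCoeff μ φ (h + k) i = systemCoeff μ φ h i + systemCoeff μ φ k i := by
  simp only [systemCoeff, Pi.add_apply, add_mul, integral_add hh hk]

theorem enorm_systemCoeff_le {h : X → 𝕜} (hh : AEStronglyMeasurable h μ) (i : ι) :
    ‖systemCoeff μ φ h i‖ₑ ≤ eLpNorm (φ i) ∞ μ * eLpNorm h 1 μ := calc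
  ‖systemCoeff μ φ h i‖ₑ ≤ ∫⁻ x, ‖h x * conj (φ i x)‖ₑ ∂μ := enorm_integral_le_lintegral_enorm _
  _ ≤ ∫⁻ x, eLpNorm (φ i) ∞ μ * ‖h x‖ₑ ∂μ := by
    refine lintegral_mono_ae ?_
    filter_upwards [enorm_ae_le_eLpNormEssSup (φ i) μ] with x hx
    rw [enorm_mul, RCLike.enorm_conj, mul_comm, eLpNorm_exponent_top]
    gcongr
  _ = eLpNorm (φ i) ∞ μ * eLpNorm h 1 μ := by
    rw [lintegral_const_mul'' _ hh.enorm, eLpNorm_one_eq_lintegral_enorm]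

theorem l2Norm_systemCoeff_le_eLpNorm_two (hφ₂ : ∀ i, MemLp (φ i) 2 μ)
    (hφ : Orthonormal 𝕜 fun i ↦ (hφ₂ i).toLp (φ i)) {h : X → 𝕜} (hh : MemLp h 2 μ) :
    l2Norm s (systemCoeff μ φ h) ≤ eLpNorm h 2 μ := by
  have inner_eq (i : ι) : inner 𝕜 ((hφ₂ i).toLp (φ i)) (hh.toLp h) = systemCoeff μ φ h i := by
    rw [L2.inner_def]
    refine integral_congr_ae ?_
    filter_upwards [hh.coeFn_toLp, (hφ₂ i).coeFn_toLp] with x hhx hφx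
    rw [hhx, hφx, RCLike.inner_apply]
  have bessel := hφ.sum_inner_products_le (hh.toLp h) (s := s)
  simp only [inner_eq] at bessel
  rw [l2Norm, one_div, ENNReal.rpow_inv_le_iff two_pos, ← Lp.enorm_toLp hh]
  simp only [ENNReal.rpow_two, ← ofReal_norm, ← ENNReal.ofReal_pow (norm_nonneg _)]
  rw [← ENNReal.ofReal_sum_of_nonneg fun _ _ ↦ by positivity]
  exact ENNReal.ofReal_le_ofReal bessel

/-- The coefficient map `h ↦ (∫ h conj(φᵢ) dμ)_{i ∈ s}` is well defined on `Lᵖ(μ)`, and bounded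
from `Lᵖ(μ)` to `ℓ²(s)` with constant `C`. -/
structure IsCoeffBound (μ : Measure X) (φ : ι → X → 𝕜) (p : ℝ≥0∞) (s : Finset ι) (C : ℝ≥0) :
    Prop where
  integrable_mul_conj : ∀ {h : X → 𝕜}, MemLp h p μ →
    ∀ i ∈ s, Integrable (fun x ↦ h x * conj (φ i x)) μ
  l2Norm_le : ∀ {h : X → 𝕜}, MemLp h p μ → l2Norm s (systemCoeff μ φ h) ≤ C * eLpNorm h p μ

theorem isCoeffBound_two (hφ₂ : ∀ i, MemLp (φ i) 2 μ)
    (hφ : Orthonormal 𝕜 fun i ↦ (hφ₂ i).toLp (φ i)) : IsCoeffBound μ φ 2 s 1 where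
  integrable_mul_conj hh i _ := hh.integrable_mul (hφ₂ i).star
  l2Norm_le hh := by simpa using l2Norm_systemCoeff_le_eLpNorm_two hφ₂ hφ hh

theorem isCoeffBound_one {M : ℝ≥0} {N : ℕ} (hφ : ∀ i, AEStronglyMeasurable (φ i) μ)
    (hφM : ∀ i, eLpNorm (φ i) ∞ μ ≤ M) (hs : s.card ≤ N) :
    IsCoeffBound μ φ 1 s ((N : ℝ≥0) ^ (1 / 2 : ℝ) * M) where
  integrable_mul_conj hh i _ :=
    hh.integrable_mul (MemLp.star ⟨hφ i, (hφM i).trans_lt ENNReal.coe_lt_top⟩)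
  l2Norm_le {h} hh := calc
    l2Norm s (systemCoeff μ φ h) ≤ l2Norm s fun _ ↦ M * eLpNorm h 1 μ :=
      l2Norm_mono fun i _ ↦ (enorm_systemCoeff_le hh.1 i).trans (mul_le_mul_left (hφM i) _)
    _ = (s.card : ℝ≥0∞) ^ (1 / 2 : ℝ) * (M * eLpNorm h 1 μ) := l2Norm_const _
    _ ≤ (N : ℝ≥0∞) ^ (1 / 2 : ℝ) * (M * eLpNorm h 1 μ) := by gcongr
    _ = ((N : ℝ≥0) ^ (1 / 2 : ℝ) * M : ℝ≥0) * eLpNorm h 1 μ := by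
      rw [ENNReal.coe_mul, ENNReal.coe_rpow_of_nonneg _ (by positivity), ENNReal.coe_natCast,
        mul_assoc]

end Coefficients

section DoubleCoefficients

variable {𝕜 ι κ X Y : Type*} [RCLike 𝕜] [MeasurableSpace X] [MeasurableSpace Y]
  {μ : Measure X} {ν : Measure Y} {φ : ι → X → 𝕜} {ψ : κ → Y → 𝕜}
  {e : Finset ι} {ω : ι → Finset κ} {p q : ℝ≥0∞}

/-- The mixed norm of `L_{(p,q)}`: the `Lᵖ` norm in the first variable, followed by the `L^q` norm
in the second one. -/
noncomputable def mixedLpNorm (μ : Measure X) (ν : Measure Y) (p q : ℝ≥0∞) (f : X → Y → 𝕜) :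
    ℝ≥0∞ :=
  eLpNorm (fun y ↦ eLpNorm (f · y) p μ) q ν

/-- The Fourier coefficients of `f` with respect to the product system `φᵢ(x) ψⱼ(y)`, as an iterated
integral with inner variable `x`. -/
noncomputable def doubleCoeff (μ : Measure X) (ν : Measure Y) (φ : ι → X → 𝕜) (ψ : κ → Y → 𝕜)
    (f : X → Y → 𝕜) (i : ι) (j : κ) : 𝕜 :=
  systemCoeff ν ψ (fun y ↦ systemCoeff μ φ (f · y) i) j

theorem measurable_eLpNorm_left [SFinite μ] (hp : p ≠ ⊤) {f : X → Y → 𝕜}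
    (hf : Measurable (Function.uncurry f)) : Measurable fun y ↦ eLpNorm (f · y) p μ := by
  rcases eq_or_ne p 0 with rfl | hp0
  · simp
  simp only [eLpNorm_eq_lintegral_rpow_enorm_toReal hp0 hp]
  exact (Measurable.lintegral_prod_left' (f := fun z ↦ ‖f z.1 z.2‖ₑ ^ p.toReal)
    (hf.enorm.pow_const _)).pow_const _

theorem ae_memLp_left [SFinite μ] (hp : p ≠ ⊤) (hq0 : q ≠ 0) (hq : q ≠ ⊤)
    {f : X → Y → 𝕜} (hf : Measurable (Function.uncurry f)) (hfpq : mixedLpNorm μ ν p q f ≠ ⊤) :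
    ∀ᵐ y ∂ν, MemLp (f · y) p μ := by
  have lintegral_lt_top : ∫⁻ y, eLpNorm (f · y) p μ ^ q.toReal ∂ν < ⊤ :=
    lintegral_rpow_enorm_lt_top_of_eLpNorm_lt_top hq0 hq hfpq.lt_top
  filter_upwards [ae_lt_top ((measurable_eLpNorm_left hp hf).pow_const _) lintegral_lt_top.ne]
    with y hy
  exact ⟨(hf.comp measurable_prodMk_right).aestronglyMeasurable,
    (ENNReal.rpow_lt_top_iff_of_pos (ENNReal.toReal_pos hq0 hq)).1 hy⟩

theorem stronglyMeasurable_systemCoeff_left [SFinite μ] {i : ι}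
    (hφ : AEStronglyMeasurable (φ i) μ) {f : X → Y → 𝕜} (hf : Measurable (Function.uncurry f)) :
    StronglyMeasurable fun y ↦ systemCoeff μ φ (f · y) i := by
  have hmk (y : Y) : systemCoeff μ φ (f · y) i = ∫ x, f x y * conj (hφ.mk _ x) ∂μ :=
    integral_congr_ae (hφ.ae_eq_mk.mono fun x hx ↦ by simp only [hx])
  simp only [hmk]
  exact StronglyMeasurable.integral_prod_left' (f := fun z ↦ f z.1 z.2 * conj (hφ.mk _ z.1))
    (hf.stronglyMeasurable.mul <| RCLike.continuous_conj.comp_stronglyMeasurable <|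
      hφ.stronglyMeasurable_mk.comp_measurable measurable_fst)

/-- The double coefficients of `f` over the block `{(i, j) | i ∈ e, j ∈ ω i}` are given by
absolutely convergent iterated integrals, and their `ℓ²` norm is at most `B`. -/
structure IsDoubleCoeffBound (μ : Measure X) (ν : Measure Y) (φ : ι → X → 𝕜) (ψ : κ → Y → 𝕜)
    (e : Finset ι) (ω : ι → Finset κ) (f : X → Y → 𝕜) (B : ℝ≥0∞) : Prop where
  integrable_left : ∀ i ∈ e, ∀ᵐ y ∂ν, Integrable (fun x ↦ f x y * conj (φ i x)) μ
  integrable_right : ∀ i ∈ e, ∀ j ∈ ω i,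
    Integrable (fun y ↦ systemCoeff μ φ (f · y) i * conj (ψ j y)) ν
  l2Norm_le : l2Norm e (fun i ↦ l2Norm (ω i) (doubleCoeff μ ν φ ψ f i)) ≤ B

theorem IsDoubleCoeffBound.add {f g : X → Y → 𝕜} {B B' : ℝ≥0∞}
    (hf : IsDoubleCoeffBound μ ν φ ψ e ω f B) (hg : IsDoubleCoeffBound μ ν φ ψ e ω g B') :
    IsDoubleCoeffBound μ ν φ ψ e ω (f + g) (B + B') := by
  have left_add : ∀ i ∈ e, (fun y ↦ systemCoeff μ φ ((f + g) · y) i) =ᵐ[ν]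
      (fun y ↦ systemCoeff μ φ (f · y) i) + fun y ↦ systemCoeff μ φ (g · y) i := by
    intro i hi
    filter_upwards [hf.integrable_left i hi, hg.integrable_left i hi] with y hfy hgy
    exact systemCoeff_add hfy hgy
  have coeff_add : ∀ i ∈ e, ∀ j ∈ ω i, doubleCoeff μ ν φ ψ (f + g) i j
      = doubleCoeff μ ν φ ψ f i j + doubleCoeff μ ν φ ψ g i j := fun i hi j hj ↦
    (systemCoeff_congr_ae (left_add i hi) j).trans
      (systemCoeff_add (hf.integrable_right i hi j hj) (hg.integrable_right i hi j hj))
  refine ⟨fun i hi ↦ ?_, fun i hi j hj ↦ ?_, ?_⟩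
  · filter_upwards [hf.integrable_left i hi, hg.integrable_left i hi] with y hfy hgy
    exact (hfy.add hgy).congr (.of_forall fun x ↦ (add_mul _ _ _).symm)
  · refine ((hf.integrable_right i hi j hj).add (hg.integrable_right i hi j hj)).congr ?_
    filter_upwards [left_add i hi] with y hy
    rw [hy]
    exact (add_mul _ _ _).symm
  · calc l2Norm e (fun i ↦ l2Norm (ω i) (doubleCoeff μ ν φ ψ (f + g) i))
        ≤ l2Norm e ((fun i ↦ l2Norm (ω i) (doubleCoeff μ ν φ ψ f i))
          + fun i ↦ l2Norm (ω i) (doubleCoeff μ ν φ ψ g i)) :=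
        l2Norm_mono fun i hi ↦
          (l2Norm_mono fun j hj ↦ by rw [coeff_add i hi j hj, Pi.add_apply]).trans
            (l2Norm_add_le _ _)
      _ ≤ B + B' := (l2Norm_add_le _ _).trans (add_le_add hf.l2Norm_le hg.l2Norm_le)

theorem isDoubleCoeffBound_of_isCoeffBound [SFinite μ] {C D : ℝ≥0} (hp : p ≠ ⊤) (hq0 : q ≠ 0)
    (hq : q ≤ 2) (hφm : ∀ i, AEStronglyMeasurable (φ i) μ) (hφ : IsCoeffBound μ φ p e C)
    (hψ : ∀ i ∈ e, IsCoeffBound ν ψ q (ω i) D) {f : X → Y → 𝕜}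
    (hf : Measurable (Function.uncurry f)) (hfpq : mixedLpNorm μ ν p q f ≠ ⊤) :
    IsDoubleCoeffBound μ ν φ ψ e ω f (C * D * mixedLpNorm μ ν p q f) := by
  let g (i : ι) (y : Y) : 𝕜 := systemCoeff μ φ (f · y) i
  have hslice := ae_memLp_left hp hq0 (ne_top_of_le_ne_top ENNReal.ofNat_ne_top hq) hf hfpq
  have l2_slice : ∀ᵐ y ∂ν, l2Norm e (g · y) ≤ C * eLpNorm (f · y) p μ :=
    hslice.mono fun y hy ↦ hφ.l2Norm_le hy
  have l2_g : eLpNorm (fun y ↦ l2Norm e (g · y)) q ν ≤ C * mixedLpNorm μ ν p q f :=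
    eLpNorm_le_nnreal_smul_eLpNorm_of_ae_le_mul' (by simpa only [enorm_eq_self] using l2_slice) q
  have memLp_g : ∀ i ∈ e, MemLp (g i) q ν := fun i hi ↦ by
    refine ⟨(stronglyMeasurable_systemCoeff_left (hφm i) hf).aestronglyMeasurable, ?_⟩
    calc eLpNorm (g i) q ν ≤ eLpNorm (fun y ↦ l2Norm e (g · y)) q ν :=
          eLpNorm_mono_enorm fun y ↦ enorm_le_l2Norm (g · y) hi
      _ ≤ C * mixedLpNorm μ ν p q f := l2_g
      _ < ⊤ := ENNReal.mul_lt_top ENNReal.coe_lt_top hfpq.lt_top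
  refine ⟨fun i hi ↦ hslice.mono fun y hy ↦ hφ.integrable_mul_conj hy i hi,
    fun i hi j hj ↦ (hψ i hi).integrable_mul_conj (memLp_g i hi) j hj, ?_⟩
  calc l2Norm e (fun i ↦ l2Norm (ω i) (doubleCoeff μ ν φ ψ f i))
      ≤ l2Norm e fun i ↦ D * eLpNorm (g i) q ν :=
        l2Norm_mono fun i hi ↦ (hψ i hi).l2Norm_le (memLp_g i hi)
    _ = D * l2Norm e fun i ↦ eLpNorm (g i) q ν := l2Norm_const_mul _ _
    _ ≤ D * eLpNorm (fun y ↦ l2Norm e (g · y)) q ν := by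
        gcongr
        exact l2Norm_eLpNorm_le_eLpNorm_l2Norm hq fun i hi ↦ (memLp_g i hi).1
    _ ≤ D * (C * mixedLpNorm μ ν p q f) := by gcongr
    _ = C * D * mixedLpNorm μ ν p q f := by ring

theorem isDoubleCoeffBound_add_add_add [SFinite μ] {M₁ M₂ : ℝ≥0} {N₁ N₂ : ℕ}
    (hφ₂ : ∀ i, MemLp (φ i) 2 μ) (hφ : Orthonormal 𝕜 fun i ↦ (hφ₂ i).toLp (φ i))
    (hψ₂ : ∀ j, MemLp (ψ j) 2 ν) (hψ : Orthonormal 𝕜 fun j ↦ (hψ₂ j).toLp (ψ j))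
    (hφM : ∀ i, eLpNorm (φ i) ∞ μ ≤ M₁) (hψM : ∀ j, eLpNorm (ψ j) ∞ ν ≤ M₂)
    (he : e.card ≤ N₁) (hω : ∀ i ∈ e, (ω i).card ≤ N₂) {f₀₀ f₁₀ f₀₁ f₁₁ : X → Y → 𝕜}
    (hf₀₀ : Measurable (Function.uncurry f₀₀)) (hf₁₀ : Measurable (Function.uncurry f₁₀))
    (hf₀₁ : Measurable (Function.uncurry f₀₁)) (hf₁₁ : Measurable (Function.uncurry f₁₁))
    (h₀₀ : mixedLpNorm μ ν 1 1 f₀₀ ≠ ⊤) (h₁₀ : mixedLpNorm μ ν 2 1 f₁₀ ≠ ⊤)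
    (h₀₁ : mixedLpNorm μ ν 1 2 f₀₁ ≠ ⊤) (h₁₁ : mixedLpNorm μ ν 2 2 f₁₁ ≠ ⊤) :
    IsDoubleCoeffBound μ ν φ ψ e ω (f₀₀ + f₁₀ + f₀₁ + f₁₁)
      ((N₁ : ℝ≥0∞) ^ (1 / 2 : ℝ) * M₁ * ((N₂ : ℝ≥0∞) ^ (1 / 2 : ℝ) * M₂) * mixedLpNorm μ ν 1 1 f₀₀
        + (N₂ : ℝ≥0∞) ^ (1 / 2 : ℝ) * M₂ * mixedLpNorm μ ν 2 1 f₁₀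
        + (N₁ : ℝ≥0∞) ^ (1 / 2 : ℝ) * M₁ * mixedLpNorm μ ν 1 2 f₀₁
        + mixedLpNorm μ ν 2 2 f₁₁) := by
  have hφm (i : ι) : AEStronglyMeasurable (φ i) μ := (hφ₂ i).1
  have hφ_one := isCoeffBound_one hφm hφM he
  have hφ_two : IsCoeffBound μ φ 2 e 1 := isCoeffBound_two hφ₂ hφ
  have hψ_one := fun i hi ↦ isCoeffBound_one (fun j ↦ (hψ₂ j).1) hψM (hω i hi)
  have hψ_two : ∀ i ∈ e, IsCoeffBound ν ψ 2 (ω i) 1 := fun i _ ↦ isCoeffBound_two hψ₂ hψ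
  have b₀₀ := isDoubleCoeffBound_of_isCoeffBound one_ne_top one_ne_zero one_le_two
    hφm hφ_one hψ_one hf₀₀ h₀₀
  have b₁₀ := isDoubleCoeffBound_of_isCoeffBound ofNat_ne_top one_ne_zero one_le_two
    hφm hφ_two hψ_one hf₁₀ h₁₀
  have b₀₁ := isDoubleCoeffBound_of_isCoeffBound one_ne_top two_ne_zero le_rfl
    hφm hφ_one hψ_two hf₀₁ h₀₁
  have b₁₁ := isDoubleCoeffBound_of_isCoeffBound ofNat_ne_top two_ne_zero le_rfl
    hφm hφ_two hψ_two hf₁₁ h₁₁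
  simpa [ENNReal.coe_rpow_of_nonneg] using ((b₀₀.add b₁₀).add b₀₁).add b₁₁

theorem weighted_sum_le_max_mul_max_mul (n₁ n₂ M₁ M₂ A B C D : ℝ≥0∞) :
    n₁ * M₁ * (n₂ * M₂) * A + n₂ * M₂ * B + n₁ * M₁ * C + D
      ≤ max 1 M₁ * max 1 M₂ * (n₁ * n₂ * A + n₂ * B + n₁ * C + D) := calc
  n₁ * M₁ * (n₂ * M₂) * A + n₂ * M₂ * B + n₁ * M₁ * C + D
    = M₁ * M₂ * (n₁ * n₂ * A) + 1 * M₂ * (n₂ * B) + M₁ * 1 * (n₁ * C) + 1 * 1 * D := by ring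
  _ ≤ max 1 M₁ * max 1 M₂ * (n₁ * n₂ * A) + max 1 M₁ * max 1 M₂ * (n₂ * B)
      + max 1 M₁ * max 1 M₂ * (n₁ * C) + max 1 M₁ * max 1 M₂ * D := by
    gcongr <;> first | exact le_max_left _ _ | exact le_max_right _ _
  _ = max 1 M₁ * max 1 M₂ * (n₁ * n₂ * A + n₂ * B + n₁ * C + D) := by ring

/-- The K-functional of `f` for the four mixed-norm spaces `L_{(p,q)}`, `p, q ∈ {1, 2}`, with the
weights `(N₁N₂)^{1/2}`, `N₂^{1/2}`, `N₁^{1/2}` and `1`: the infimum of the weighted sum of norms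
over all decompositions `f = f₀₀ + f₁₀ + f₀₁ + f₁₁`. -/
noncomputable def mixedKFunctional (μ : Measure X) (ν : Measure Y) (N₁ N₂ : ℕ) (f : X → Y → 𝕜) :
    ℝ≥0∞ :=
  sInf {v : ℝ≥0∞ | ∃ f₀₀ f₁₀ f₀₁ f₁₁ : X → Y → 𝕜,
    Measurable (Function.uncurry f₀₀) ∧ Measurable (Function.uncurry f₁₀) ∧
    Measurable (Function.uncurry f₀₁) ∧ Measurable (Function.uncurry f₁₁) ∧
    (∀ x y, f x y = f₀₀ x y + f₁₀ x y + f₀₁ x y + f₁₁ x y) ∧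
    mixedLpNorm μ ν 1 1 f₀₀ ≠ ⊤ ∧ mixedLpNorm μ ν 2 1 f₁₀ ≠ ⊤ ∧
    mixedLpNorm μ ν 1 2 f₀₁ ≠ ⊤ ∧ mixedLpNorm μ ν 2 2 f₁₁ ≠ ⊤ ∧
    v = ((N₁ : ℝ≥0∞) * (N₂ : ℝ≥0∞)) ^ (1 / 2 : ℝ) * mixedLpNorm μ ν 1 1 f₀₀
        + (N₂ : ℝ≥0∞) ^ (1 / 2 : ℝ) * mixedLpNorm μ ν 2 1 f₁₀
        + (N₁ : ℝ≥0∞) ^ (1 / 2 : ℝ) * mixedLpNorm μ ν 1 2 f₀₁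
        + mixedLpNorm μ ν 2 2 f₁₁}

theorem stmt_11_general [SFinite μ] {M₁ M₂ : ℝ≥0} {N₁ N₂ : ℕ}
    (hφ₂ : ∀ i, MemLp (φ i) 2 μ) (hφ : Orthonormal 𝕜 fun i ↦ (hφ₂ i).toLp (φ i))
    (hψ₂ : ∀ j, MemLp (ψ j) 2 ν) (hψ : Orthonormal 𝕜 fun j ↦ (hψ₂ j).toLp (ψ j))
    (hφM : ∀ i, eLpNorm (φ i) ∞ μ ≤ M₁) (hψM : ∀ j, eLpNorm (ψ j) ∞ ν ≤ M₂)
    (he : e.card ≤ N₁) (hω : ∀ i ∈ e, (ω i).card ≤ N₂) (f : X → Y → 𝕜) :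
    (∑ i ∈ e, ∑ j ∈ ω i, ‖doubleCoeff μ ν φ ψ f i j‖ₑ ^ (2 : ℝ)) ^ (1 / 2 : ℝ)
      ≤ max 1 (M₁ : ℝ≥0∞) * max 1 (M₂ : ℝ≥0∞) * mixedKFunctional μ ν N₁ N₂ f := by
  have hC0 : max 1 (M₁ : ℝ≥0∞) * max 1 (M₂ : ℝ≥0∞) ≠ 0 := by simp
  have hC : max 1 (M₁ : ℝ≥0∞) * max 1 (M₂ : ℝ≥0∞) ≠ ⊤ := by finiteness
  rw [← ENNReal.div_le_iff' hC0 hC]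
  refine le_sInf ?_
  rintro _ ⟨f₀₀, f₁₀, f₀₁, f₁₁, hf₀₀, hf₁₀, hf₀₁, hf₁₁, hf, h₀₀, h₁₀, h₀₁, h₁₁, rfl⟩
  obtain rfl : f = f₀₀ + f₁₀ + f₀₁ + f₁₁ := funext₂ hf
  rw [ENNReal.div_le_iff' hC0 hC, ← l2Norm_l2Norm,
    ENNReal.mul_rpow_of_nonneg _ _ (one_half_pos (α := ℝ)).le]
  exact (isDoubleCoeffBound_add_add_add hφ₂ hφ hψ₂ hψ hφM hψM he hω hf₀₀ hf₁₀ hf₀₁ hf₁₁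
    h₀₀ h₁₀ h₀₁ h₁₁).l2Norm_le.trans (weighted_sum_le_max_mul_max_mul ..)

end DoubleCoefficients

section UnitSquare

theorem coeff_eq_doubleCoeff (φ ψ : ℕ → ℝ → ℂ) (f : ℝ → ℝ → ℂ) :
    coeff φ ψ f = doubleCoeff (volume.restrict (Icc 0 1)) (volume.restrict (Icc 0 1)) φ ψ f := by
  funext i j
  simp only [coeff, doubleCoeff, systemCoeff, integral_mul_const]

theorem mixedNorm_toReal {p q : ℝ≥0∞} (hp0 : p ≠ 0) (hp : p ≠ ⊤) (hq0 : q ≠ 0) (hq : q ≠ ⊤)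
    (f : ℝ → ℝ → ℂ) :
    mixedNorm p.toReal q.toReal f
      = mixedLpNorm (volume.restrict (Icc 0 1)) (volume.restrict (Icc 0 1)) p q f := by
  simp only [mixedNorm, mixedLpNorm, eLpNorm_eq_lintegral_rpow_enorm_toReal hp0 hp,
    eLpNorm_eq_lintegral_rpow_enorm_toReal hq0 hq, enorm_eq_self, ← ENNReal.rpow_mul,
    one_div_mul_eq_div]
  rfl

theorem mixedKFunctional_unitSquare (N₁ N₂ : ℕ) (f : ℝ → ℝ → ℂ) :
    mixedKFunctional (volume.restrict (Icc 0 1)) (volume.restrict (Icc 0 1)) N₁ N₂ f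
      = sInf {v : ℝ≥0∞ | ∃ f00 f10 f01 f11 : ℝ → ℝ → ℂ,
          Measurable (Function.uncurry f00) ∧ Measurable (Function.uncurry f10) ∧
          Measurable (Function.uncurry f01) ∧ Measurable (Function.uncurry f11) ∧
          (∀ x₁ x₂ : ℝ, f x₁ x₂ = f00 x₁ x₂ + f10 x₁ x₂ + f01 x₁ x₂ + f11 x₁ x₂) ∧
          mixedNorm 1 1 f00 ≠ ⊤ ∧ mixedNorm 2 1 f10 ≠ ⊤ ∧
          mixedNorm 1 2 f01 ≠ ⊤ ∧ mixedNorm 2 2 f11 ≠ ⊤ ∧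
          v = ((N₁ : ℝ≥0∞) * (N₂ : ℝ≥0∞)) ^ ((1:ℝ)/2) * mixedNorm 1 1 f00
              + (N₂ : ℝ≥0∞) ^ ((1:ℝ)/2) * mixedNorm 2 1 f10
              + (N₁ : ℝ≥0∞) ^ ((1:ℝ)/2) * mixedNorm 1 2 f01
              + mixedNorm 2 2 f11} := by
  have h₁₁ := mixedNorm_toReal one_ne_zero one_ne_top one_ne_zero one_ne_top
  have h₂₁ := mixedNorm_toReal two_ne_zero ofNat_ne_top one_ne_zero one_ne_top
  have h₁₂ := mixedNorm_toReal one_ne_zero one_ne_top two_ne_zero ofNat_ne_top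
  have h₂₂ := mixedNorm_toReal two_ne_zero ofNat_ne_top two_ne_zero ofNat_ne_top
  simp only [toReal_one, toReal_ofNat] at h₁₁ h₂₁ h₁₂ h₂₂
  simp only [mixedKFunctional, h₁₁, h₂₁, h₁₂, h₂₂]

theorem eLpNorm_top_unitInterval_le {g : ℝ → ℂ} {M : ℝ} (hg : ∀ x ∈ Icc (0 : ℝ) 1, ‖g x‖ ≤ M) :
    eLpNorm g ∞ (volume.restrict (Icc 0 1)) ≤ ENNReal.ofReal M :=
  eLpNormEssSup_le_of_ae_bound (ae_restrict_of_forall_mem measurableSet_Icc hg)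

theorem memLp_two_unitInterval {g : ℝ → ℂ} (hgm : Measurable g) {M : ℝ}
    (hg : ∀ x ∈ Icc (0 : ℝ) 1, ‖g x‖ ≤ M) : MemLp g 2 (volume.restrict (Icc 0 1)) :=
  .of_bound hgm.aestronglyMeasurable M (ae_restrict_of_forall_mem measurableSet_Icc hg)

theorem OrthonormalOn01.orthonormal_toLp {φ : ℕ → ℝ → ℂ} (hφ : OrthonormalOn01 φ)
    (hφ₂ : ∀ m, MemLp (φ m) 2 (volume.restrict (Icc 0 1))) :
    Orthonormal ℂ fun m ↦ (hφ₂ m).toLp (φ m) := by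
  rw [orthonormal_iff_ite]
  intro m n
  simp only [eq_comm (a := m), ← hφ n m, L2.inner_def]
  refine integral_congr_ae ?_
  filter_upwards [(hφ₂ m).coeFn_toLp, (hφ₂ n).coeFn_toLp] with x hm hn
  rw [hm, hn, RCLike.inner_apply]

end UnitSquare

/-- K-functional estimate for the coefficient sums:
`S(N₁,N₂) ≤ 2 max(1,M₁) max(1,M₂) ·
  inf { (N₁N₂)^{1/2}‖f₀₀‖_{(1,1)} + N₂^{1/2}‖f₁₀‖_{(2,1)} + N₁^{1/2}‖f₀₁‖_{(1,2)} + ‖f₁₁‖_{(2,2)} }`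
over decompositions `f = f₀₀ + f₁₀ + f₀₁ + f₁₁`. -/
theorem stmt_11 (φ ψ : ℕ → ℝ → ℂ) (M₁ M₂ : ℝ)
    (hφm : ∀ m, Measurable (φ m)) (hψm : ∀ m, Measurable (ψ m))
    (hφ : OrthonormalOn01 φ) (hψ : OrthonormalOn01 ψ)
    (hφbd : ∀ m, ∀ x ∈ Icc (0:ℝ) 1, ‖φ m x‖ ≤ M₁)
    (hψbd : ∀ m, ∀ x ∈ Icc (0:ℝ) 1, ‖ψ m x‖ ≤ M₂)
    (f : ℝ → ℝ → ℂ)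
    (hfint : IntegrableOn (Function.uncurry f) (Icc (0:ℝ) 1 ×ˢ Icc (0:ℝ) 1))
    (N₁ N₂ : ℕ) :
    Ssup (coeff φ ψ f) N₁ N₂ ≤
      ENNReal.ofReal (2 * max 1 M₁ * max 1 M₂) *
        sInf {v : ℝ≥0∞ | ∃ f00 f10 f01 f11 : ℝ → ℝ → ℂ,
          Measurable (Function.uncurry f00) ∧ Measurable (Function.uncurry f10) ∧
          Measurable (Function.uncurry f01) ∧ Measurable (Function.uncurry f11) ∧
          (∀ x₁ x₂ : ℝ, f x₁ x₂ = f00 x₁ x₂ + f10 x₁ x₂ + f01 x₁ x₂ + f11 x₁ x₂) ∧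
          mixedNorm 1 1 f00 ≠ ⊤ ∧ mixedNorm 2 1 f10 ≠ ⊤ ∧
          mixedNorm 1 2 f01 ≠ ⊤ ∧ mixedNorm 2 2 f11 ≠ ⊤ ∧
          v = ((N₁ : ℝ≥0∞) * (N₂ : ℝ≥0∞)) ^ ((1:ℝ)/2) * mixedNorm 1 1 f00
              + (N₂ : ℝ≥0∞) ^ ((1:ℝ)/2) * mixedNorm 2 1 f10
              + (N₁ : ℝ≥0∞) ^ ((1:ℝ)/2) * mixedNorm 1 2 f01
              + mixedNorm 2 2 f11} := by
  rw [coeff_eq_doubleCoeff, ← mixedKFunctional_unitSquare]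
  have hφ₂ := fun m ↦ memLp_two_unitInterval (hφm m) (hφbd m)
  have hψ₂ := fun m ↦ memLp_two_unitInterval (hψm m) (hψbd m)
  have hconst : max 1 (ENNReal.ofReal M₁) * max 1 (ENNReal.ofReal M₂)
      ≤ ENNReal.ofReal (2 * max 1 M₁ * max 1 M₂) := by
    rw [← ENNReal.ofReal_one, ← ENNReal.ofReal_max, ← ENNReal.ofReal_max,
      ← ENNReal.ofReal_mul (by positivity)]
    gcongr
    linarith [le_max_left 1 M₁]
  refine iSup₂_le fun e he ↦ iSup₂_le fun ω hω ↦ ?_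
  exact (stmt_11_general hφ₂ (hφ.orthonormal_toLp hφ₂) hψ₂ (hψ.orthonormal_toLp hψ₂)
    (fun m ↦ eLpNorm_top_unitInterval_le (hφbd m)) (fun m ↦ eLpNorm_top_unitInterval_le (hψbd m))
    he.le (fun m hm ↦ (hω m hm).le) f).trans (mul_le_mul_left hconst _)
end
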